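/- Fix λ ∈ ℝ, let ξ : ℤ → ℝ and let n, ℓ ≥ 1 be integers. Then (2 − λξ_0)·(ξ_n − vec{ξ}_n^ℓ + ξ_{−n} − lvec{ξ}_{−n}^ℓ) = −Lφ_{n,ℓ}(ξ), where vec{ξ}_n^ℓ = (ξ_{n+1} + ⋯ + ξ_{n+ℓ})/ℓ and lvec{ξ}_{−n}^ℓ = (ξ_{−n−1} + ⋯ + ξ_{−n−ℓ})/ℓ. -/

import Mathlib

open scoped BigOperators

/-- The configuration obtained from `ξ` by exchanging the values at sites `y` and `y+1`. -/
def swapConf (ξ : ℤ → ℝ) (y : ℤ) : ℤ → ℝ :=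
  fun x => if x = y then ξ (y + 1) else if x = y + 1 then ξ y else ξ x

/-- The shifted configuration `(θ_k ξ)_x = ξ_{x+k}`. -/
def shiftConf (k : ℤ) (ξ : ℤ → ℝ) : ℤ → ℝ := fun x => ξ (x + k)

/-- Generator of the environment seen from the walk. -/
noncomputable def envGen (lam : ℝ) (f : (ℤ → ℝ) → ℝ) (ξ : ℤ → ℝ) : ℝ :=
  (∑' y : ℤ, (f (swapConf ξ y) - f ξ)) +
    (1 - lam * ξ 0) * (f (shiftConf 1 ξ) + f (shiftConf (-1) ξ) - 2 * f ξ)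

/-- `φ_{n,ℓ}(ξ) := Σ_{j=0}^{ℓ−1} ((ℓ−j)/ℓ) Σ_{x=−n−j}^{n+j} ξ_x`. -/
noncomputable def phiFun (n ℓ : ℕ) (ξ : ℤ → ℝ) : ℝ :=
  ∑ j ∈ Finset.range ℓ,
    (((ℓ : ℝ) - (j : ℝ)) / (ℓ : ℝ)) *
      ∑ x ∈ Finset.Icc (-(n : ℤ) - (j : ℤ)) ((n : ℤ) + (j : ℤ)), ξ x

lemma swap_sum (ξ : ℤ → ℝ) (m : ℕ) (y : ℤ) :
    ∑ x ∈ Finset.Icc (-(m : ℤ)) m, swapConf ξ y x - ∑ x ∈ Finset.Icc (-(m : ℤ)) m, ξ x =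
      (if y = (m : ℤ) then ξ (m + 1) - ξ m else 0) +
      (if y = -(m : ℤ) - 1 then ξ (-(m : ℤ) - 1) - ξ (-(m : ℤ)) else 0) := by
  have h1 : ∀ x, swapConf ξ y x - ξ x = (if x = y then ξ (y + 1) - ξ y else 0) +
      (if x = y + 1 then ξ y - ξ (y + 1) else 0) := by
    intro x
    unfold swapConf
    by_cases h : x = y
    · subst h; simp
    · by_cases h' : x = y + 1
      · subst h'; simp
      · simp [h, h']
  rw [← Finset.sum_sub_distrib, Finset.sum_congr rfl (fun x _ => h1 x), Finset.sum_add_distrib,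
    Finset.sum_ite_eq', Finset.sum_ite_eq']
  simp only [Finset.mem_Icc]
  by_cases ha : y = (m : ℤ)
  · subst ha
    rw [if_pos (by omega), if_neg (by omega), if_pos rfl, if_neg (by omega)]
  · by_cases hb : y = -(m : ℤ) - 1
    · subst hb
      rw [if_neg (by omega), if_pos (by omega), if_neg (by omega), if_pos rfl]
      simp
    · rw [if_neg ha, if_neg hb]
      by_cases hc : -(m : ℤ) ≤ y ∧ y ≤ m
      · rw [if_pos hc, if_pos (by omega)]; ring
      · rw [if_neg hc, if_neg (by omega)]

lemma swap_hasSum (ξ : ℤ → ℝ) (m : ℕ) :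
    HasSum (fun y : ℤ => ∑ x ∈ Finset.Icc (-(m : ℤ)) m, swapConf ξ y x
        - ∑ x ∈ Finset.Icc (-(m : ℤ)) m, ξ x)
      ((ξ (m + 1) - ξ m) + (ξ (-(m : ℤ) - 1) - ξ (-(m : ℤ)))) := by
  simp only [swap_sum]
  exact (hasSum_ite_eq (m : ℤ) _).add (hasSum_ite_eq (-(m : ℤ) - 1) _)

lemma Icc_succ_sum (f : ℤ → ℝ) (m : ℕ) :
    ∑ x ∈ Finset.Icc (-((m + 1 : ℕ) : ℤ)) (m + 1 : ℕ), f x =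
      ∑ x ∈ Finset.Icc (-(m : ℤ)) m, f x + f (m + 1) + f (-(m : ℤ) - 1) := by
  have : Finset.Icc (-((m + 1 : ℕ) : ℤ)) (m + 1 : ℕ) =
      insert (-(m : ℤ) - 1) (insert ((m : ℤ) + 1) (Finset.Icc (-(m : ℤ)) m)) := by
    ext x; simp only [Finset.mem_Icc, Finset.mem_insert]; omega
  rw [this, Finset.sum_insert, Finset.sum_insert]
  · ring
  · simp
  · simp only [Finset.mem_Icc, Finset.mem_insert]; omega

lemma shift_sum (ξ : ℤ → ℝ) (m : ℕ) :
    ∑ x ∈ Finset.Icc (-(m : ℤ)) m, shiftConf 1 ξ x +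
      ∑ x ∈ Finset.Icc (-(m : ℤ)) m, shiftConf (-1) ξ x
      - 2 * ∑ x ∈ Finset.Icc (-(m : ℤ)) m, ξ x =
      (ξ (m + 1) - ξ m) + (ξ (-(m : ℤ) - 1) - ξ (-(m : ℤ))) := by
  induction m with
  | zero => simp [shiftConf]; ring
  | succ m ih =>
    rw [Icc_succ_sum, Icc_succ_sum, Icc_succ_sum]
    have e1 : -(m : ℤ) - 1 + 1 = -(m : ℤ) := by ring
    have e2 : (m : ℤ) + 1 + -1 = m := by ring
    have e3 : -((m : ℤ) + 1) = -(m : ℤ) - 1 := by ring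
    have e4 : -(m : ℤ) - 1 + -1 = -(m : ℤ) - 1 - 1 := by ring
    simp only [shiftConf, Nat.cast_add, Nat.cast_one, e1, e2, e3, e4] at ih ⊢
    linarith

lemma abel_sum (a : ℕ → ℝ) (ℓ : ℕ) :
    ∑ j ∈ Finset.range ℓ, ((ℓ : ℝ) - j) * (a (j + 1) - a j) =
      ∑ j ∈ Finset.Icc 1 ℓ, a j - ℓ * a 0 := by
  induction ℓ with
  | zero => simp
  | succ k ih =>
    have h : ∀ j : ℕ, (((k + 1 : ℕ) : ℝ) - j) * (a (j + 1) - a j) =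
        ((k : ℝ) - j) * (a (j + 1) - a j) + (a (j + 1) - a j) := by
      intro j; push_cast; ring
    rw [Finset.sum_congr rfl (fun j _ => h j), Finset.sum_add_distrib, Finset.sum_range_sub,
      Finset.sum_range_succ, ih, Finset.sum_Icc_succ_top (by omega)]
    push_cast; ring

lemma phi_eq (n ℓ : ℕ) (ξ : ℤ → ℝ) : phiFun n ℓ ξ = ∑ j ∈ Finset.range ℓ,
    (((ℓ : ℝ) - (j : ℝ)) / (ℓ : ℝ)) *
      ∑ x ∈ Finset.Icc (-((n + j : ℕ) : ℤ)) ((n + j : ℕ) : ℤ), ξ x := by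
  unfold phiFun
  refine Finset.sum_congr rfl fun j _ => ?_
  rw [show -((n + j : ℕ) : ℤ) = -(n : ℤ) - j by push_cast; ring, Nat.cast_add]

lemma envGen_phi_aux (lam : ℝ) (ξ : ℤ → ℝ) (n ℓ : ℕ) :
    envGen lam (phiFun n ℓ) ξ = (2 - lam * ξ 0) * ∑ j ∈ Finset.range ℓ,
      (((ℓ : ℝ) - (j : ℝ)) / (ℓ : ℝ)) *
      ((ξ ((n + j : ℕ) + 1) - ξ (n + j : ℕ)) +
        (ξ (-((n + j : ℕ) : ℤ) - 1) - ξ (-((n + j : ℕ) : ℤ)))) := by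
  have hs := hasSum_sum (s := Finset.range ℓ) (fun j _ =>
    (swap_hasSum ξ (n + j)).mul_left (((ℓ : ℝ) - (j : ℝ)) / (ℓ : ℝ)))
  have h1 : (fun y : ℤ => phiFun n ℓ (swapConf ξ y) - phiFun n ℓ ξ) = fun y => ∑ j ∈ Finset.range ℓ,
      (((ℓ : ℝ) - (j : ℝ)) / (ℓ : ℝ)) *
        (∑ x ∈ Finset.Icc (-((n + j : ℕ) : ℤ)) ((n + j : ℕ) : ℤ), swapConf ξ y x -
          ∑ x ∈ Finset.Icc (-((n + j : ℕ) : ℤ)) ((n + j : ℕ) : ℤ), ξ x) := by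
    funext y
    rw [phi_eq, phi_eq, ← Finset.sum_sub_distrib]
    simp only [← mul_sub]
  have h2 : phiFun n ℓ (shiftConf 1 ξ) + phiFun n ℓ (shiftConf (-1) ξ) - 2 * phiFun n ℓ ξ =
      ∑ j ∈ Finset.range ℓ, (((ℓ : ℝ) - (j : ℝ)) / (ℓ : ℝ)) *
      ((ξ ((n + j : ℕ) + 1) - ξ (n + j : ℕ)) +
        (ξ (-((n + j : ℕ) : ℤ) - 1) - ξ (-((n + j : ℕ) : ℤ)))) := by
    rw [phi_eq, phi_eq, phi_eq, Finset.mul_sum, ← Finset.sum_add_distrib,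
      ← Finset.sum_sub_distrib]
    refine Finset.sum_congr rfl fun j _ => ?_
    rw [← shift_sum]; ring
  unfold envGen
  rw [h2, h1, hs.tsum_eq]
  ring

/-- `(2 − λξ_0)(ξ_n − vec{ξ}_n^ℓ + ξ_{−n} − lvec{ξ}_{−n}^ℓ) = −Lφ_{n,ℓ}(ξ)`,
where `vec{ξ}_n^ℓ = (ξ_{n+1} + ⋯ + ξ_{n+ℓ})/ℓ` and `lvec{ξ}_{−n}^ℓ = (ξ_{−n−1} + ⋯ + ξ_{−n−ℓ})/ℓ`. -/
theorem envGen_phi (lam : ℝ) (ξ : ℤ → ℝ) (n ℓ : ℕ) (hn : 1 ≤ n) (hℓ : 1 ≤ ℓ) :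
    (2 - lam * ξ 0) *
        (ξ (n : ℤ) - (1 / (ℓ : ℝ)) * ∑ j ∈ Finset.Icc 1 ℓ, ξ ((n : ℤ) + (j : ℤ)) +
          ξ (-(n : ℤ)) - (1 / (ℓ : ℝ)) * ∑ j ∈ Finset.Icc 1 ℓ, ξ (-(n : ℤ) - (j : ℤ))) =
      -envGen lam (phiFun n ℓ) ξ := by
  have hl : (ℓ : ℝ) ≠ 0 := by positivity
  rw [envGen_phi_aux]
  have h := abel_sum (fun j => ξ ((n : ℤ) + j) + ξ (-(n : ℤ) - j)) ℓ
  have h3 : ∑ j ∈ Finset.range ℓ, (((ℓ : ℝ) - (j : ℝ)) / (ℓ : ℝ)) *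
      ((ξ ((n + j : ℕ) + 1) - ξ (n + j : ℕ)) +
        (ξ (-((n + j : ℕ) : ℤ) - 1) - ξ (-((n + j : ℕ) : ℤ)))) =
      (1 / (ℓ : ℝ)) * ∑ j ∈ Finset.range ℓ, ((ℓ : ℝ) - j) *
        ((ξ ((n : ℤ) + (j + 1 : ℕ)) + ξ (-(n : ℤ) - (j + 1 : ℕ))) -
          (ξ ((n : ℤ) + j) + ξ (-(n : ℤ) - j))) := by
    rw [Finset.mul_sum]
    refine Finset.sum_congr rfl fun j _ => ?_
    have e1 : ((n + j : ℕ) : ℤ) + 1 = (n : ℤ) + (j + 1 : ℕ) := by push_cast; ring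
    have e2 : -((n + j : ℕ) : ℤ) - 1 = -(n : ℤ) - (j + 1 : ℕ) := by push_cast; ring
    have e3 : -((n + j : ℕ) : ℤ) = -(n : ℤ) - j := by push_cast; ring
    have e4 : ((n + j : ℕ) : ℤ) = (n : ℤ) + j := by push_cast; ring
    rw [e2, e1, e3, e4]
    ring
  rw [h3, h, Finset.sum_add_distrib]
  simp only [Nat.cast_zero, add_zero, sub_zero]
  field_simp
  ring
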